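/- arXiv:1705.09417 — 7 statements merged into one kernel-verified Lean document; each statement's English description precedes it below -/
import Mathlib

section
/- Fix a Borel set A ⊆ ℝ such that N(m,1)(A) > 0 for every m ∈ ℝ, and fix y ∈ ℝ. Then for every μ₀ ∈ ℝ, the conditional log-likelihood function m ↦ log φ(y; m, 1) − log N(m,1)(A) is differentiable at μ₀ with derivative equal to y − ∫ x d(N(μ₀,1)[·|A]), i.e. the conditional score equals the observation minus the conditional (post-selection) mean. -/
/-!
Tilting the standard Gaussian gives `φ(x; m, 1) = exp (-m² / 2) * exp (m * x) * φ(x; 0, 1)`.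
Hence `N(m,1)(A) = exp (-m² / 2) * M m`, where `M` is the moment generating function of
`N(0,1)` restricted to `A`, and the conditional log-likelihood is
`log φ(y; 0, 1) + m * y - log (M m)`: the factor `exp (-m² / 2)` cancels. Since `M` is finite
everywhere, it is differentiable with `M' m = ∫ x in A, x * exp (m * x) ∂N(0,1)`, and the same
tilting identity shows that `M' m / M m` is the mean of `N(m,1)` conditioned on `A`.
-/

open MeasureTheory ProbabilityTheory

lemma gaussianPDFReal_one_eq_tilt (m x : ℝ) :
    gaussianPDFReal m 1 x
      = Real.exp (-m ^ 2 / 2) * Real.exp (m * x) * gaussianPDFReal 0 1 x := by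
  simp only [gaussianPDFReal, NNReal.coe_one]
  rw [mul_left_comm, ← Real.exp_add, ← Real.exp_add]
  congr 2
  ring

lemma setIntegral_gaussianReal_one_eq_tilt {A : Set ℝ} (hA : MeasurableSet A) (m : ℝ)
    (g : ℝ → ℝ) :
    ∫ x in A, g x ∂(gaussianReal m 1)
      = Real.exp (-m ^ 2 / 2) * ∫ x in A, g x * Real.exp (m * x) ∂(gaussianReal 0 1) := by
  rw [← integral_const_mul, ← integral_indicator hA, ← integral_indicator hA,
    integral_gaussianReal_eq_integral_smul one_ne_zero,
    integral_gaussianReal_eq_integral_smul one_ne_zero]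
  congr 1 with x
  by_cases hx : x ∈ A
  · simp only [hx, Set.indicator_of_mem, smul_eq_mul, gaussianPDFReal_one_eq_tilt m x]
    ring
  · simp [hx]

lemma toReal_gaussianReal_one_eq_mgf {A : Set ℝ} (hA : MeasurableSet A) (m : ℝ) :
    (gaussianReal m 1 A).toReal
      = Real.exp (-m ^ 2 / 2) * mgf id ((gaussianReal 0 1).restrict A) m := by
  have h := setIntegral_gaussianReal_one_eq_tilt hA m (fun _ => 1)
  simpa [mgf, measureReal_def] using h

/-- Conditional score identity for the univariate Gaussian family with known
variance 1: the derivative of the conditional log-likelihood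
`m ↦ log φ(y; m, 1) − log N(m,1)(A)` at `μ₀` equals the observation minus the
post-selection mean `y − ∫ x d(N(μ₀,1)[·|A])`. -/
theorem conditional_score_gaussian
    (A : Set ℝ) (hA : MeasurableSet A)
    (hpos : ∀ m : ℝ, 0 < gaussianReal m 1 A)
    (y : ℝ) (μ₀ : ℝ) :
    HasDerivAt
      (fun m : ℝ =>
        Real.log (gaussianPDFReal m 1 y) - Real.log ((gaussianReal m 1 A).toReal))
      (y - ∫ x, x ∂((gaussianReal μ₀ 1)[|A])) μ₀ := by
  set M := mgf id ((gaussianReal 0 1).restrict A) with hM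
  have hMpos (m : ℝ) : 0 < M m := by
    have h := ENNReal.toReal_pos (hpos m).ne' (measure_ne_top _ _)
    rw [toReal_gaussianReal_one_eq_mgf hA] at h
    exact pos_of_mul_pos_right h (Real.exp_pos _).le
  have hloglik : (fun m : ℝ =>
      Real.log (gaussianPDFReal m 1 y) - Real.log ((gaussianReal m 1 A).toReal))
      = fun m => Real.log (gaussianPDFReal 0 1 y) + m * y - Real.log (M m) := by
    funext m
    rw [toReal_gaussianReal_one_eq_mgf hA, gaussianPDFReal_one_eq_tilt m y,
      Real.log_mul (by positivity) (gaussianPDFReal_pos 0 1 y one_ne_zero).ne',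
      Real.log_mul (Real.exp_pos _).ne' (Real.exp_pos _).ne',
      Real.log_mul (Real.exp_pos _).ne' (hMpos m).ne', Real.log_exp, Real.log_exp]
    ring
  have hmem : μ₀ ∈ interior (integrableExpSet id ((gaussianReal 0 1).restrict A)) := by
    have huniv : integrableExpSet id ((gaussianReal 0 1).restrict A) = Set.univ :=
      Set.eq_univ_of_forall fun t => (integrable_exp_mul_gaussianReal t).restrict
    simp [huniv]
  have hmean : ∫ x, x ∂((gaussianReal μ₀ 1)[|A])
      = (∫ x in A, x * Real.exp (μ₀ * x) ∂(gaussianReal 0 1)) / M μ₀ := by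
    rw [ProbabilityTheory.cond, integral_smul_measure, ENNReal.toReal_inv,
      toReal_gaussianReal_one_eq_mgf hA,
      setIntegral_gaussianReal_one_eq_tilt hA μ₀ (fun x => x), ← hM, smul_eq_mul]
    have := (hMpos μ₀).ne'
    field_simp
  rw [hloglik, hmean]
  have hderiv := (((hasDerivAt_id μ₀).mul_const y).const_add
    (Real.log (gaussianPDFReal 0 1 y))).sub ((hasDerivAt_mgf hmem).log (hMpos μ₀).ne')
  simp only [id_eq, one_mul] at hderiv
  exact hderiv
end

section
/- Fix a Borel set A ⊆ ℝ such that N(m,1)(A) > 0 for every m ∈ ℝ, and fix y ∈ ℝ. Then for every μ₀ ∈ ℝ, the conditional log-likelihood function m ↦ log φ(y; m, 1) − log N(m,1)(A) is twice differentiable at μ₀ and its second derivative at μ₀ equals the negative of the variance of the identity map under N(μ₀,1)[·|A], i.e. −∫ (x − m_A)² d(N(μ₀,1)[·|A]) where m_A = ∫ x d(N(μ₀,1)[·|A]). -/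
open MeasureTheory ProbabilityTheory

/-!
The family `N(m, 1)` is an exponential family: `N(m, 1)` has density `exp (-m² / 2) exp (m x)` with
respect to `N(0, 1)`. Restricting to `A` and writing `ν` for `N(0, 1)` restricted to `A`, this says
`N(m, 1)(A) = exp (-m² / 2) * mgf id ν m`, and that `N(m, 1)` conditioned on `A` is the
exponential tilt of `ν` by `m x`. The terms `∓ m² / 2` cancel in the conditional log-likelihood,
which is therefore `const + y m - cgf id ν m`. The cumulant generating function is analytic and its
second derivative at `m` is the variance under the tilt of `ν` by `m x`.
-/

/-- The exponential family form of `N(m, 1)`, restricted to `A`. -/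
lemma restrict_gaussianReal_eq (A : Set ℝ) (hA : MeasurableSet A) (m : ℝ) :
    (gaussianReal m 1).restrict A = ((gaussianReal 0 1).restrict A).withDensity
      (fun x => ENNReal.ofReal (Real.exp (-m ^ 2 / 2) * Real.exp (m * x))) := by
  rw [← restrict_withDensity hA]
  congr 1
  rw [gaussianReal_of_var_ne_zero _ one_ne_zero, gaussianReal_of_var_ne_zero _ one_ne_zero,
    ← withDensity_mul _ (by fun_prop) (by fun_prop)]
  congr 1
  ext x
  rw [Pi.mul_apply, gaussianPDF, gaussianPDF,
    ← ENNReal.ofReal_mul (gaussianPDFReal_nonneg _ _ _)]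
  congr 1
  simp only [gaussianPDFReal]
  rw [← Real.exp_add, mul_assoc (_)⁻¹, ← Real.exp_add]
  congr 2
  push_cast
  ring

lemma integrableExpSet_restrict_gaussianReal (A : Set ℝ) :
    integrableExpSet id ((gaussianReal 0 1).restrict A) = Set.univ := by
  ext t
  simpa [integrableExpSet] using (integrable_exp_mul_gaussianReal (μ := 0) (v := 1) t).restrict

lemma gaussianReal_apply_eq_mgf (A : Set ℝ) (hA : MeasurableSet A) (m : ℝ) :
    gaussianReal m 1 A =
      ENNReal.ofReal (Real.exp (-m ^ 2 / 2) * mgf id ((gaussianReal 0 1).restrict A) m) := by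
  have hint : Integrable (fun x : ℝ => Real.exp (m * x)) ((gaussianReal 0 1).restrict A) :=
    (integrable_exp_mul_gaussianReal m).restrict
  rw [← Measure.restrict_apply_univ, restrict_gaussianReal_eq A hA m,
    withDensity_apply _ MeasurableSet.univ, Measure.restrict_univ,
    ← ofReal_integral_eq_lintegral_ofReal (hint.const_mul _)
      (Filter.Eventually.of_forall fun x => by positivity), integral_const_mul]
  rfl

lemma mgf_restrict_gaussianReal_pos (A : Set ℝ) (hA : MeasurableSet A) (m : ℝ)
    (hpos : 0 < gaussianReal m 1 A) : 0 < mgf id ((gaussianReal 0 1).restrict A) m := by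
  rw [gaussianReal_apply_eq_mgf A hA m, ENNReal.ofReal_pos] at hpos
  exact pos_of_mul_pos_right hpos (Real.exp_pos _).le

/-- Conditioning `N(m, 1)` on `A` amounts to tilting the restriction of `N(0, 1)` to `A`: the factor
`exp (-m² / 2)` disappears in the normalization. -/
lemma cond_gaussianReal_eq_tilted (A : Set ℝ) (hA : MeasurableSet A) (m : ℝ)
    (hpos : 0 < gaussianReal m 1 A) :
    (gaussianReal m 1)[|A] = ((gaussianReal 0 1).restrict A).tilted (m * id ·) := by
  have hM := mgf_restrict_gaussianReal_pos A hA m hpos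
  have hE := Real.exp_pos (-m ^ 2 / 2)
  rw [ProbabilityTheory.cond, restrict_gaussianReal_eq A hA m, Measure.tilted,
    ← withDensity_smul _ (by fun_prop)]
  congr 1
  ext x
  rw [Pi.smul_apply, smul_eq_mul, gaussianReal_apply_eq_mgf A hA m,
    ← ENNReal.ofReal_inv_of_pos (by positivity), ← ENNReal.ofReal_mul (by positivity)]
  congr 1
  change _ = Real.exp (m * x) / mgf id ((gaussianReal 0 1).restrict A) m
  field_simp

/-- The conditional log-likelihood is an affine function of `m` minus a cumulant generating
function. -/
lemma condLogLik_eq (A : Set ℝ) (hA : MeasurableSet A) (m y : ℝ)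
    (hpos : 0 < gaussianReal m 1 A) :
    Real.log (gaussianPDFReal m 1 y) - Real.log ((gaussianReal m 1 A).toReal) =
      Real.log (√(2 * Real.pi))⁻¹ - y ^ 2 / 2 + y * m
        - cgf id ((gaussianReal 0 1).restrict A) m := by
  have hM := mgf_restrict_gaussianReal_pos A hA m hpos
  have hE := Real.exp_pos (-m ^ 2 / 2)
  rw [gaussianReal_apply_eq_mgf A hA m, ENNReal.toReal_ofReal (by positivity),
    Real.log_mul hE.ne' hM.ne', Real.log_exp, gaussianPDFReal,
    Real.log_mul (by positivity) (by positivity), Real.log_exp, cgf]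
  push_cast
  ring_nf

/-- Conditional observed-information identity for the univariate Gaussian family
with known variance 1: the conditional log-likelihood
`m ↦ log φ(y; m, 1) − log N(m,1)(A)` is twice differentiable at `μ₀` and its
second derivative there is the negative of the conditional (post-selection)
variance `−∫ (x − m_A)² d(N(μ₀,1)[·|A])` where `m_A = ∫ x d(N(μ₀,1)[·|A])`. -/
theorem conditional_information_gaussian
    (A : Set ℝ) (hA : MeasurableSet A)
    (hpos : ∀ m : ℝ, 0 < gaussianReal m 1 A)
    (y : ℝ) (μ₀ : ℝ) :
    DifferentiableAt ℝ
      (fun m : ℝ =>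
        Real.log (gaussianPDFReal m 1 y) - Real.log ((gaussianReal m 1 A).toReal)) μ₀
    ∧ DifferentiableAt ℝ
      (deriv (fun m : ℝ =>
        Real.log (gaussianPDFReal m 1 y) - Real.log ((gaussianReal m 1 A).toReal))) μ₀
    ∧ deriv (deriv (fun m : ℝ =>
        Real.log (gaussianPDFReal m 1 y) - Real.log ((gaussianReal m 1 A).toReal))) μ₀
      = -∫ x, (x - ∫ x', x' ∂((gaussianReal μ₀ 1)[|A]))^2 ∂((gaussianReal μ₀ 1)[|A]) := by
  set ν := (gaussianReal 0 1).restrict A with hν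
  have hint : ∀ m, m ∈ interior (integrableExpSet id ν) := fun m => by
    simp [hν, integrableExpSet_restrict_gaussianReal]
  have hcgf : ∀ m, AnalyticAt ℝ (cgf id ν) m := fun m => analyticAt_cgf (hint m)
  rw [funext fun m => condLogLik_eq A hA m y (hpos m), ← hν]
  have hderiv : ∀ m, HasDerivAt
      (fun m : ℝ => Real.log (√(2 * Real.pi))⁻¹ - y ^ 2 / 2 + y * m - cgf id ν m)
      (y - deriv (cgf id ν) m) m := fun m => by
    have h := (((hasDerivAt_id m).const_mul y).const_add
      (Real.log (√(2 * Real.pi))⁻¹ - y ^ 2 / 2)).sub (hcgf m).differentiableAt.hasDerivAt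
    rw [mul_one] at h
    exact h
  rw [funext fun m => (hderiv m).deriv]
  have hderiv₂ := (hcgf μ₀).deriv.differentiableAt.hasDerivAt.const_sub y
  refine ⟨(hderiv μ₀).differentiableAt, hderiv₂.differentiableAt, ?_⟩
  rw [hderiv₂.deriv, cond_gaussianReal_eq_tilted A hA μ₀ (hpos μ₀), ← hν]
  have hvar := variance_tilted_mul (hint μ₀)
  rw [variance_eq_integral aemeasurable_id, iteratedDeriv_succ, iteratedDeriv_one] at hvar
  exact congrArg Neg.neg hvar.symm
end

section
/- Let p ≥ 1, let σ : Fin p → ℝ with σ_j > 0 for all j, and let A ⊆ (Fin p → ℝ) be a Borel set such that the product Gaussian measure ⊗_j N(m_j, σ_j²) assigns positive probability to A for every mean vector m ∈ ℝ^p. Fix y ∈ ℝ^p and an index j. Then for every mean vector μ ∈ ℝ^p, the function of the j-th mean coordinate m_j ↦ log ∏_k φ(y_k; m_k, σ_k²) − log (⊗_k N(m_k, σ_k²))(A) (all other coordinates of the mean held fixed at μ) is differentiable at μ_j with derivative (y_j − ∫ x_j d((⊗_k N(μ_k, σ_k²))[·|A])) / σ_j². -/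
/-!
The family of Gaussians with fixed variance is an exponential family: with `c = (t - m) / v`, the
measure `N(t, v)` has density `exp (c x - (c m + v c² / 2))` with respect to `N(m, v)`
(`gaussianReal_eq_withDensity`). This density lifts to the product measure, because only the
`j`-th factor changes (`pi_update_withDensity`). Hence, writing `P` for the product Gaussian with
mean `μ`, the probability of `A` under mean `update μ j t` is
`exp (-(c μ_j + σ_j² c² / 2))` times the moment generating function at `c` of the coordinate `x_j`
under `P` restricted to `A` (`measureReal_pi_gaussian_update`).

Moment generating functions are differentiable in the interior of their domain, here all of `ℝ`,
and here the derivative at `0` is the integral of `x_j` over `A`, so `log P(A)` has derivative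
`(𝔼[x_j | A] - μ_j) / σ_j²`. The unconditional log-likelihood has derivative
`(y_j - μ_j) / σ_j²`, and the difference is the claim.
-/

open MeasureTheory ProbabilityTheory

/-- Exponential tilting of a Gaussian shifts its mean. -/
lemma gaussianReal_eq_withDensity (m t : ℝ) {v : NNReal} (hv : v ≠ 0) :
    gaussianReal t v = (gaussianReal m v).withDensity (fun x => ENNReal.ofReal
      (Real.exp ((t - m) / v * x - ((t - m) / v * m + v * ((t - m) / v) ^ 2 / 2)))) := by
  have hv' : (v : ℝ) ≠ 0 := by exact_mod_cast hv
  rw [gaussianReal_of_var_ne_zero t hv, gaussianReal_of_var_ne_zero m hv,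
    ← withDensity_mul _ (measurable_gaussianPDF m v) (by fun_prop)]
  congr 1
  ext x
  simp only [Pi.mul_apply, gaussianPDF]
  rw [← ENNReal.ofReal_mul (gaussianPDFReal_nonneg _ _ _)]
  congr 1
  simp only [gaussianPDFReal]
  rw [mul_assoc _ (Real.exp _) (Real.exp _), ← Real.exp_add]
  congr 2
  field_simp
  ring

/-- A density on a single factor of a product measure is a density on the product. -/
lemma pi_update_withDensity {p : ℕ} (ν : Fin p → Measure ℝ) [∀ k, IsProbabilityMeasure (ν k)]
    (j : Fin p) (f : ℝ → ENNReal) (hf : Measurable f) (ν' : Fin p → Measure ℝ)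
    [∀ k, IsProbabilityMeasure (ν' k)] (hj : ν' j = (ν j).withDensity f)
    (hne : ∀ k, k ≠ j → ν' k = ν k) :
    Measure.pi ν' = (Measure.pi ν).withDensity (fun x => f (x j)) := by
  refine Measure.pi_eq fun s hs => ?_
  rw [withDensity_apply _ (MeasurableSet.univ_pi hs), Measure.restrict_pi_pi,
    ← lintegral_map (g := Function.eval j) hf (measurable_pi_apply j), Measure.pi_map_eval,
    lintegral_smul_measure, ← Finset.prod_erase_mul _ _ (Finset.mem_univ j), hj,
    withDensity_apply _ (hs j), smul_eq_mul]
  congr 1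
  refine Finset.prod_congr rfl fun k hk => ?_
  rw [hne k (Finset.ne_of_mem_erase hk), Measure.restrict_apply_univ]

lemma integrable_exp_mul_coord {p : ℕ} (m : Fin p → ℝ) (v : Fin p → NNReal) (j : Fin p) (c : ℝ) :
    Integrable (fun x : Fin p → ℝ => Real.exp (c * x j))
      (Measure.pi (fun k => gaussianReal (m k) (v k))) :=
  (measurePreserving_eval (fun k => gaussianReal (m k) (v k)) j).integrable_comp_of_integrable
    (integrable_exp_mul_gaussianReal c)

lemma measureReal_pi_gaussian_update {p : ℕ} (m : Fin p → ℝ) (v : Fin p → NNReal) (j : Fin p)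
    (hv : v j ≠ 0) (A : Set (Fin p → ℝ)) (hA : MeasurableSet A) (t : ℝ) :
    (Measure.pi (fun k => gaussianReal (Function.update m j t k) (v k)) A).toReal =
      Real.exp (-((t - m j) / v j * m j + v j * ((t - m j) / v j) ^ 2 / 2)) *
      mgf (fun x => x j) ((Measure.pi (fun k => gaussianReal (m k) (v k))).restrict A)
        ((t - m j) / v j) := by
  rw [pi_update_withDensity (fun k => gaussianReal (m k) (v k)) j
    (fun x => ENNReal.ofReal (Real.exp ((t - m j) / v j * x -
      ((t - m j) / v j * m j + v j * ((t - m j) / v j) ^ 2 / 2)))) (by fun_prop)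
    (fun k => gaussianReal (Function.update m j t k) (v k))
    (by simpa using gaussianReal_eq_withDensity (m j) t hv)
    (fun k hk => by simp [Function.update_of_ne hk]),
    withDensity_apply _ hA, mgf, ← integral_const_mul, integral_eq_lintegral_of_nonneg_ae
      (Filter.Eventually.of_forall fun x => by positivity)
      (Measurable.aestronglyMeasurable (by fun_prop))]
  congr 2
  ext x
  rw [← Real.exp_add]
  congr 2
  ring

/-- The derivative of the normalizing term: the mean-parameter score of the event `A` is the shift
of the mean of `x_j` caused by conditioning on `A`, divided by the variance. -/
lemma hasDerivAt_log_measure_pi_gaussian {p : ℕ} (m : Fin p → ℝ) (v : Fin p → NNReal) (j : Fin p)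
    (hv : v j ≠ 0) (A : Set (Fin p → ℝ)) (hA : MeasurableSet A)
    (hpos : 0 < Measure.pi (fun k => gaussianReal (m k) (v k)) A) :
    HasDerivAt (fun t : ℝ => Real.log
        ((Measure.pi (fun k => gaussianReal (Function.update m j t k) (v k)) A).toReal))
      ((∫ x, x j ∂((Measure.pi (fun k => gaussianReal (m k) (v k)))[|A]) - m j) / v j) (m j) := by
  set P := Measure.pi (fun k => gaussianReal (m k) (v k)) with hP
  have hv' : (v j : ℝ) ≠ 0 := by exact_mod_cast hv
  have hPA : (P A).toReal ≠ 0 := (ENNReal.toReal_pos hpos.ne' (measure_ne_top _ _)).ne'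
  have hset : integrableExpSet (fun x : Fin p → ℝ => x j) (P.restrict A) = Set.univ :=
    Set.eq_univ_of_forall fun c => (integrable_exp_mul_coord m v j c).restrict
  have hmgf : HasDerivAt (mgf (fun x => x j) (P.restrict A)) (∫ x in A, x j ∂P) 0 := by
    simpa using hasDerivAt_mgf (X := fun x : Fin p → ℝ => x j) (μ := P.restrict A) (t := 0)
      (by simp [hset])
  have hmgf0 : mgf (fun x : Fin p → ℝ => x j) (P.restrict A) 0 = (P A).toReal := by
    simp [mgf_zero', Measure.real]
  have hc : HasDerivAt (fun t : ℝ => (t - m j) / v j) (1 / v j) (m j) :=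
    ((hasDerivAt_id (m j)).sub_const _).div_const _
  have hcomp : HasDerivAt
      (fun t : ℝ => mgf (fun x => x j) (P.restrict A) ((t - m j) / v j))
      ((∫ x in A, x j ∂P) * (1 / v j)) (m j) :=
    HasDerivAt.comp (m j) (h₂ := mgf (fun x : Fin p → ℝ => x j) (P.restrict A))
      (by simpa using hmgf) hc
  have hexp := (((hc.mul_const (m j)).add (((hc.pow 2).const_mul (v j : ℝ)).div_const 2)).neg).exp
  have h := (hexp.mul hcomp).log (by simpa [hmgf0] using hPA)
  have hint : ∫ x, x j ∂(P[|A]) = (∫ x in A, x j ∂P) / (P A).toReal := by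
    rw [ProbabilityTheory.cond, integral_smul_measure, ENNReal.toReal_inv, smul_eq_mul]
    ring
  rw [hint]
  refine (h.congr_deriv ?_).congr_of_eventuallyEq (Filter.Eventually.of_forall fun t => ?_)
  · simp [hmgf0]
    field_simp
    ring
  · simp only [hP, measureReal_pi_gaussian_update m v j hv A hA t]
    rfl

/-- Conditional score identity for a product Gaussian on `ℝ^p` (independent
coordinates), one partial derivative at a time: the partial derivative of the
conditional log-likelihood in the `j`-th mean coordinate at `μ j` equals
`(y_j − ∫ x_j d(P[·|A])) / σ_j²` where `P = ⊗_k N(μ_k, σ_k²)`. -/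
theorem conditional_score_product_gaussian
    (p : ℕ) (hp : 1 ≤ p) (σ : Fin p → ℝ) (hσ : ∀ k, 0 < σ k)
    (A : Set (Fin p → ℝ)) (hA : MeasurableSet A)
    (hpos : ∀ m : Fin p → ℝ,
      0 < Measure.pi (fun k => gaussianReal (m k) ((σ k ^ 2).toNNReal)) A)
    (y : Fin p → ℝ) (j : Fin p) (μ : Fin p → ℝ) :
    HasDerivAt
      (fun t : ℝ =>
        Real.log (∏ k, gaussianPDFReal (Function.update μ j t k) ((σ k ^ 2).toNNReal) (y k))
        - Real.log
            ((Measure.pi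
              (fun k => gaussianReal (Function.update μ j t k) ((σ k ^ 2).toNNReal)) A).toReal))
      ((y j - ∫ x, x j
          ∂((Measure.pi (fun k => gaussianReal (μ k) ((σ k ^ 2).toNNReal)))[|A])) / σ j ^ 2)
      (μ j) := by
  have hv : ∀ k, (σ k ^ 2).toNNReal ≠ 0 := fun k => by
    simpa using (hσ k).ne'
  have hcoe : (((σ j ^ 2).toNNReal : NNReal) : ℝ) = σ j ^ 2 := Real.coe_toNNReal _ (by positivity)
  have h2 := hasDerivAt_log_measure_pi_gaussian μ (fun k => (σ k ^ 2).toNNReal) j (hv j) A hA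
    (hpos μ)
  -- Up to a constant in `t`, the log-likelihood is `-(y_j - t)² / (2 σ_j²)`.
  have hlog : ∀ t : ℝ,
      Real.log (∏ k, gaussianPDFReal (Function.update μ j t k) ((σ k ^ 2).toNNReal) (y k)) =
      (∑ k ∈ Finset.univ.erase j, Real.log (gaussianPDFReal (μ k) ((σ k ^ 2).toNNReal) (y k)))
        + (Real.log (√(2 * Real.pi * σ j ^ 2))⁻¹ + -(y j - t) ^ 2 / (2 * σ j ^ 2)) := by
    intro t
    rw [Real.log_prod (fun k _ => (gaussianPDFReal_pos _ _ _ (hv k)).ne'),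
      ← Finset.sum_erase_add _ _ (Finset.mem_univ j)]
    congr 1
    · refine Finset.sum_congr rfl fun k hk => ?_
      rw [Function.update_of_ne (Finset.ne_of_mem_erase hk)]
    · have := hσ j
      rw [Function.update_self, gaussianPDFReal, Real.log_mul (by rw [hcoe]; positivity)
        (Real.exp_pos _).ne', Real.log_exp, hcoe]
  have h1 : HasDerivAt (fun t : ℝ =>
      Real.log (∏ k, gaussianPDFReal (Function.update μ j t k) ((σ k ^ 2).toNNReal) (y k)))
      ((y j - μ j) / σ j ^ 2) (μ j) := by
    simp_rw [hlog]
    have hd := (((((hasDerivAt_id (μ j)).const_sub (y j)).pow 2).neg).div_const (2 * σ j ^ 2))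
    have := (hd.const_add (Real.log (√(2 * Real.pi * σ j ^ 2))⁻¹)).const_add
      (∑ k ∈ Finset.univ.erase j, Real.log (gaussianPDFReal (μ k) ((σ k ^ 2).toNNReal) (y k)))
    refine this.congr_deriv ?_
    have := (hσ j).ne'
    simp
    field_simp
  refine (h1.sub h2).congr_deriv ?_
  rw [hcoe]
  ring
end

section
/- Let σ > 0 and let l < u be real numbers. Then for every μ ∈ ℝ, N(μ,σ²)((−∞,l] ∪ [u,∞)) ≥ N((l+u)/2, σ²)((−∞,l] ∪ [u,∞)); that is, the Gaussian probability of the two-sided exceedance region {x ≤ l or x ≥ u} is minimized over the mean at the midpoint (l+u)/2 of the thresholds. -/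
/-!
Passing to complements, the claim is that `N(μ, σ²)(l, u)` is maximal at the midpoint `m`.
Translating, `N(μ, σ²)(l, u)` is the mass that the fixed law `N(m, σ²)` gives to the shifted
interval `A = (l + (m - μ), u + (m - μ))`, to be compared with `B = (l, u)`. Since `A` and `B`
have the same length, `A \ B` and `B \ A` have the same Lebesgue measure; the density of
`N(m, σ²)` is at least its value `c` at `u` on `B`, and at most `c` off `B`. Hence `B` carries at
least as much mass as `A` (`setLIntegral_le_of_volume_eq`, the bathtub principle).
-/

open MeasureTheory ProbabilityTheory

/-- Bathtub principle: among sets of equal finite volume, one on which the density is `≥ c`, and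
outside of which it is `≤ c`, has the largest mass. -/
lemma setLIntegral_le_of_volume_eq {f : ℝ → ENNReal} {A B : Set ℝ} {c : ENNReal}
    (hA : MeasurableSet A) (hB : MeasurableSet B)
    (hvol : volume A = volume B) (hfin : volume B ≠ ⊤)
    (hin : ∀ x ∈ B, c ≤ f x) (hout : ∀ x ∉ B, f x ≤ c) :
    ∫⁻ x in A, f x ≤ ∫⁻ x in B, f x := by
  have hdiff : volume (A \ B) = volume (B \ A) := by
    have h1 := measure_inter_add_sdiff (μ := volume) A hB
    have h2 := measure_inter_add_sdiff (μ := volume) B hA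
    rw [Set.inter_comm, hvol, ← h2] at h1
    exact (ENNReal.add_right_inj (measure_ne_top_of_subset Set.inter_subset_left hfin)).1 h1
  rw [← lintegral_inter_add_sdiff f A hB, ← lintegral_inter_add_sdiff f B hA, Set.inter_comm B A]
  gcongr 1
  calc ∫⁻ x in A \ B, f x ≤ ∫⁻ _ in A \ B, c :=
        setLIntegral_mono measurable_const fun x hx => hout x hx.2
    _ = ∫⁻ _ in B \ A, c := by simp [hdiff]
    _ ≤ ∫⁻ x in B \ A, f x := setLIntegral_mono' (hB.diff hA) fun x hx => hin x hx.1

lemma gaussianPDF_le_of_sq_le {m : ℝ} {v : NNReal} {x y : ℝ}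
    (h : (y - m) ^ 2 ≤ (x - m) ^ 2) : gaussianPDF m v x ≤ gaussianPDF m v y := by
  unfold gaussianPDF gaussianPDFReal
  gcongr

/-- The Gaussian probability of the two-sided exceedance region
`{x ≤ l or x ≥ u}` is minimized over the mean at the midpoint `(l+u)/2`. -/
theorem gaussian_two_sided_min_at_midpoint
    (σ : ℝ) (hσ : 0 < σ) (l u : ℝ) (hlu : l < u) (μ : ℝ) :
    gaussianReal ((l + u) / 2) ((σ ^ 2).toNNReal) (Set.Iic l ∪ Set.Ici u)
      ≤ gaussianReal μ ((σ ^ 2).toNNReal) (Set.Iic l ∪ Set.Ici u) := by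
  have hv : (σ ^ 2).toNNReal ≠ 0 := (Real.toNNReal_pos.2 (by positivity)).ne'
  generalize (σ ^ 2).toNNReal = v at hv
  have hset : Set.Iic l ∪ Set.Ici u = (Set.Ioo l u)ᶜ := by
    ext x
    simp only [Set.mem_union, Set.mem_Iic, Set.mem_Ici, Set.mem_compl_iff, Set.mem_Ioo]
    grind
  rw [hset, prob_compl_eq_one_sub measurableSet_Ioo, prob_compl_eq_one_sub measurableSet_Ioo]
  apply tsub_le_tsub_left
  set m := (l + u) / 2 with hm
  have hshift : gaussianReal μ v (Set.Ioo l u)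
      = gaussianReal m v (Set.Ioo (l + (m - μ)) (u + (m - μ))) := by
    have h := gaussianReal_map_sub_const (μ := m) (v := v) (m - μ)
    rw [sub_sub_cancel] at h
    rw [← h, Measure.map_apply (by fun_prop) measurableSet_Ioo, Set.preimage_sub_const_Ioo]
  rw [hshift, gaussianReal_apply m hv, gaussianReal_apply m hv]
  apply setLIntegral_le_of_volume_eq (c := gaussianPDF m v u) measurableSet_Ioo measurableSet_Ioo
  · simp
  · simp
  · rintro x ⟨h1, h2⟩
    apply gaussianPDF_le_of_sq_le
    nlinarith [mul_pos (sub_pos.2 h1) (sub_pos.2 h2)]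
  · intro x hx
    apply gaussianPDF_le_of_sq_le
    -- The two squares differ by `(x - l) * (x - u)`, as `m` is the midpoint.
    have h : 0 ≤ (x - l) * (x - u) := by
      rcases le_or_gt x l with h | h
      · exact mul_nonneg_of_nonpos_of_nonpos (by linarith) (by linarith)
      · have : u ≤ x := not_lt.1 fun h' => hx ⟨h, h'⟩
        exact mul_nonneg (by linarith) (by linarith)
    rw [hm]
    nlinarith
end

section
/- Let p ≥ 1, let μ ∈ ℝ^p, let σ : Fin p → ℝ with σ_k > 0, let l_k < u_k be thresholds for each k, and let P = ⊗_k N(μ_k, σ_k²) be the product Gaussian measure on ℝ^p. Fix a nonempty set M ⊆ {1,…,p} and let E_M = {y ∈ ℝ^p : (y_j ≤ l_j or y_j ≥ u_j) for all j ∈ M, and l_j < y_j < u_j for all j ∉ M} be the selection event. Then P(E_M) > 0 and for every j ∈ M, ∫ (y_j − μ_j)² d(P[·|E_M]) ≤ (Σ_{k=1}^p σ_k²) / ( P(⋂_{k∉M} {l_k < y_k < u_k}) · ∏_{k∈M} N(u_k, σ_k²)((−∞, l_k]) ). -/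
/-!
The measure is a product, so `P(E_M)` factors as the probability of the constraints off `M` times
`∏_{k ∈ M} N(μ_k, σ_k²)({y ≤ l_k} ∪ {y ≥ u_k})`. Each factor with `k ∈ M` is at least
`N(u_k, σ_k²)((-∞, l_k])`, whatever the mean `μ_k`
(`gaussianReal_Iic_le_gaussianReal_selected`), so the denominator in the claim is a lower bound for
`P(E_M)`, and it is positive. The unnormalised integral of `(y_j - μ_j)²` over `E_M` is at most the
full integral `σ_j²` (`integral_sq_eval_pi_gaussianReal`), which is at most `∑ k, σ_k²`.
-/

open MeasureTheory ProbabilityTheory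

lemma gaussianReal_pos_of_volume_pos (m : ℝ) {v : NNReal} (hv : v ≠ 0) {s : Set ℝ}
    (hs : 0 < volume s) : 0 < gaussianReal m v s := by
  rw [pos_iff_ne_zero] at hs ⊢
  exact fun h => hs (gaussianReal_absolutelyContinuous' m hv h)

/-- If `m ≤ u`, translating the Gaussian from mean `u` to mean `m` moves mass to the left, so the
lower tail suffices. Otherwise `m ≥ u ≥ l`, and the reflection `x ↦ m + u - x`, which exchanges the
two means, carries the lower tail under mean `u` into the upper tail under mean `m`. -/
lemma gaussianReal_Iic_le_gaussianReal_selected (m : ℝ) (v : NNReal) {l u : ℝ} (hlu : l < u) :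
    gaussianReal u v (Set.Iic l) ≤ gaussianReal m v {x | x ≤ l ∨ u ≤ x} := by
  rcases le_total m u with h | h
  · have e : gaussianReal u v = (gaussianReal m v).map (· + (u - m)) := by
      rw [gaussianReal_map_add_const]; congr 1; ring
    rw [e, Measure.map_apply (by fun_prop) measurableSet_Iic]
    refine measure_mono fun x hx => Or.inl ?_
    have hx' : x + (u - m) ≤ l := hx
    linarith
  · have e : gaussianReal u v = (gaussianReal m v).map (fun x => (m + u) - x) := by
      rw [gaussianReal_map_const_sub]; congr 1; ring
    rw [e, Measure.map_apply (by fun_prop) measurableSet_Iic]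
    refine measure_mono fun x hx => Or.inr ?_
    have hx' : m + u - x ≤ l := hx
    linarith

lemma integrable_sq_gaussianReal (m : ℝ) (v : NNReal) :
    Integrable (fun x => (x - m) ^ 2) (gaussianReal m v) :=
  ((memLp_id_gaussianReal 2).sub (memLp_const m)).integrable_sq

lemma integral_sq_gaussianReal (m : ℝ) (v : NNReal) :
    ∫ x, (x - m) ^ 2 ∂gaussianReal m v = v := by
  have h := variance_eq_integral (μ := gaussianReal m v) (X := fun x => x) (by fun_prop)
  rw [variance_fun_id_gaussianReal, integral_id_gaussianReal] at h
  exact h.symm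

lemma integrable_sq_eval_pi_gaussianReal {p : ℕ} (μ : Fin p → ℝ) (v : Fin p → NNReal) (j : Fin p) :
    Integrable (fun y : Fin p → ℝ => (y j - μ j) ^ 2)
      (Measure.pi fun k => gaussianReal (μ k) (v k)) :=
  (measurePreserving_eval (fun k => gaussianReal (μ k) (v k)) j).integrable_comp_of_integrable
    (integrable_sq_gaussianReal (μ j) (v j))

lemma integral_sq_eval_pi_gaussianReal {p : ℕ} (μ : Fin p → ℝ) (v : Fin p → NNReal) (j : Fin p) :
    ∫ y : Fin p → ℝ, (y j - μ j) ^ 2 ∂(Measure.pi fun k => gaussianReal (μ k) (v k)) = v j := by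
  rw [← integral_sq_gaussianReal (μ j) (v j)]
  exact integral_comp_eval (μ := fun k => gaussianReal (μ k) (v k)) (i := j)
    (f := fun x => (x - μ j) ^ 2) (by fun_prop)

/-- A product of probability measures decouples the coordinates in `M` from the others. -/
lemma pi_selection_eq_mul {p : ℕ} (ν : Fin p → Measure ℝ) [∀ k, IsProbabilityMeasure (ν k)]
    (l u : Fin p → ℝ) (M : Finset (Fin p)) :
    Measure.pi ν {y : Fin p → ℝ | (∀ j ∈ M, y j ≤ l j ∨ u j ≤ y j)
        ∧ ∀ j ∉ M, l j < y j ∧ y j < u j}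
      = Measure.pi ν {y : Fin p → ℝ | ∀ k ∉ M, l k < y k ∧ y k < u k}
        * ∏ k ∈ M, ν k {x | x ≤ l k ∨ u k ≤ x} := by
  classical
  have e1 : {y : Fin p → ℝ | (∀ j ∈ M, y j ≤ l j ∨ u j ≤ y j) ∧ ∀ j ∉ M, l j < y j ∧ y j < u j}
      = Set.univ.pi (fun k => if k ∈ M then {x | x ≤ l k ∨ u k ≤ x} else Set.Ioo (l k) (u k)) := by
    ext y
    simp only [Set.mem_ofPred_eq, Set.mem_univ_pi, ← forall_and]
    refine forall_congr' fun k => ?_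
    by_cases hk : k ∈ M <;> simp [hk]
  have e2 : {y : Fin p → ℝ | ∀ k ∉ M, l k < y k ∧ y k < u k}
      = Set.univ.pi (fun k => if k ∈ M then Set.univ else Set.Ioo (l k) (u k)) := by
    ext y
    simp only [Set.mem_ofPred_eq, Set.mem_univ_pi]
    refine forall_congr' fun k => ?_
    by_cases hk : k ∈ M <;> simp [hk]
  rw [e1, e2, Measure.pi_pi, Measure.pi_pi, ← Fintype.prod_ite_mem M, ← Finset.prod_mul_distrib]
  refine Finset.prod_congr rfl fun k _ => ?_
  by_cases hk : k ∈ M <;> simp [hk]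

lemma pi_unselected_pos {p : ℕ} (μ : Fin p → ℝ) {v : Fin p → NNReal} (hv : ∀ k, v k ≠ 0)
    {l u : Fin p → ℝ} (hlu : ∀ k, l k < u k) (M : Finset (Fin p)) :
    0 < Measure.pi (fun k => gaussianReal (μ k) (v k))
      {y : Fin p → ℝ | ∀ k ∉ M, l k < y k ∧ y k < u k} := by
  have hbox : 0 < Measure.pi (fun k => gaussianReal (μ k) (v k))
      (Set.univ.pi fun k => Set.Ioo (l k) (u k)) := by
    rw [Measure.pi_pi, pos_iff_ne_zero, Finset.prod_ne_zero_iff]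
    intro k _
    exact (gaussianReal_pos_of_volume_pos _ (hv k) (by simp [hlu k])).ne'
  exact hbox.trans_le (measure_mono fun y hy k _ => hy k (Set.mem_univ k))

/-- Variance bound of Theorem 1 of the paper (diagonal covariance case): the
selection event has positive probability and the post-selection second moment
of each selected coordinate is bounded by `tr(Σ)` divided by a product of
per-coordinate selection probabilities. -/
theorem post_selection_variance_bound
    (p : ℕ) (hp : 1 ≤ p) (μ : Fin p → ℝ) (σ : Fin p → ℝ) (hσ : ∀ k, 0 < σ k)
    (l u : Fin p → ℝ) (hlu : ∀ k, l k < u k)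
    (M : Finset (Fin p)) (hM : M.Nonempty) :
    0 < Measure.pi (fun k => gaussianReal (μ k) ((σ k ^ 2).toNNReal))
          {y : Fin p → ℝ | (∀ j ∈ M, y j ≤ l j ∨ u j ≤ y j)
            ∧ ∀ j ∉ M, l j < y j ∧ y j < u j}
    ∧ ∀ j ∈ M,
        ∫ y : Fin p → ℝ, (y j - μ j) ^ 2
            ∂((Measure.pi (fun k => gaussianReal (μ k) ((σ k ^ 2).toNNReal)))[|
              {y : Fin p → ℝ | (∀ j ∈ M, y j ≤ l j ∨ u j ≤ y j)
                ∧ ∀ j ∉ M, l j < y j ∧ y j < u j}])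
          ≤ (∑ k, σ k ^ 2) /
              ((Measure.pi (fun k => gaussianReal (μ k) ((σ k ^ 2).toNNReal))
                  {y : Fin p → ℝ | ∀ k ∉ M, l k < y k ∧ y k < u k}).toReal
                * ∏ k ∈ M, (gaussianReal (u k) ((σ k ^ 2).toNNReal) (Set.Iic (l k))).toReal) := by
  have hv : ∀ k, (σ k ^ 2).toNNReal ≠ 0 := fun k => by
    have := hσ k
    simpa using this.ne'
  set P := Measure.pi (fun k => gaussianReal (μ k) ((σ k ^ 2).toNNReal)) with hP
  set E := {y : Fin p → ℝ | (∀ j ∈ M, y j ≤ l j ∨ u j ≤ y j)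
            ∧ ∀ j ∉ M, l j < y j ∧ y j < u j} with hE
  set U := {y : Fin p → ℝ | ∀ k ∉ M, l k < y k ∧ y k < u k}
  -- The denominator of the bound, as an extended nonnegative real.
  set D := P U * ∏ k ∈ M, gaussianReal (u k) ((σ k ^ 2).toNNReal) (Set.Iic (l k)) with hD
  have hDE : D ≤ P E := by
    rw [hE, hP, pi_selection_eq_mul, hD]
    exact mul_le_mul_right (Finset.prod_le_prod' fun k _ =>
      gaussianReal_Iic_le_gaussianReal_selected _ _ (hlu k)) _
  have hDpos : 0 < D := by
    rw [pos_iff_ne_zero]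
    refine mul_ne_zero (pi_unselected_pos μ hv hlu M).ne' (Finset.prod_ne_zero_iff.2 fun k _ => ?_)
    exact (gaussianReal_pos_of_volume_pos _ (hv k) (by simp)).ne'
  refine ⟨hDpos.trans_le hDE, fun j _ => ?_⟩
  have hDreal : (P U).toReal
      * ∏ k ∈ M, (gaussianReal (u k) ((σ k ^ 2).toNNReal) (Set.Iic (l k))).toReal = D.toReal := by
    rw [hD, ENNReal.toReal_mul, ENNReal.toReal_prod]
  have hDtop : D ≠ ⊤ := ne_top_of_le_ne_top (measure_ne_top P E) hDE
  have hnum : ∫ y in E, (y j - μ j) ^ 2 ∂P ≤ ∑ k, σ k ^ 2 :=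
    calc ∫ y in E, (y j - μ j) ^ 2 ∂P
        ≤ ∫ y, (y j - μ j) ^ 2 ∂P :=
          setIntegral_le_integral (integrable_sq_eval_pi_gaussianReal μ _ j)
            (Filter.Eventually.of_forall fun y => sq_nonneg _)
      _ = σ j ^ 2 := by
          rw [hP, integral_sq_eval_pi_gaussianReal, Real.coe_toNNReal _ (sq_nonneg _)]
      _ ≤ ∑ k, σ k ^ 2 :=
          Finset.single_le_sum (f := fun k => σ k ^ 2) (fun k _ => sq_nonneg _) (Finset.mem_univ j)
  rw [hDreal, ProbabilityTheory.cond, integral_smul_measure, ENNReal.toReal_inv, smul_eq_mul,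
    inv_mul_eq_div]
  exact div_le_div₀ (Finset.sum_nonneg fun k _ => sq_nonneg _) hnum
    (ENNReal.toReal_pos hDpos.ne' hDtop) (ENNReal.toReal_mono (measure_ne_top P E) hDE)
end

section
/- Let c ∈ ℝ and define f(μ) = ∫ x d(N(μ,1)[·|(c,∞)]), the conditional mean of a N(μ,1) random variable given that it exceeds c. Then for every μ₀ ∈ ℝ, f is differentiable at μ₀ with derivative equal to the conditional variance ∫ (x − f(μ₀))² d(N(μ₀,1)[·|(c,∞)]), and this derivative is strictly positive. -/
/-!
The Gaussian densities satisfy `N(μ,1) = exp (μ x - μ² / 2) · N(0,1)`, so the family of truncated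
measures `N(μ,1)[·|(c,∞)]` is the natural exponential family generated by the finite measure
`ρ = N(0,1)|_(c,∞)`: it consists of the exponential tilts `ρ.tilted (μ * ·)`
(`cond_gaussianReal_eq_tilted`). The mean and the variance of such a tilt are the first and second
derivatives at `μ` of the cumulant generating function of `ρ`, which is analytic on all of `ℝ`
because Gaussians have all exponential moments. The variance is positive because the truncated
measure has no atoms, so the identity is not almost everywhere constant under it.
-/

open MeasureTheory ProbabilityTheory

lemma gaussianReal_eq_withDensity_exp (μ : ℝ) :
    gaussianReal μ 1 = (gaussianReal 0 1).withDensity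
      (fun x ↦ ENNReal.ofReal (Real.exp (μ * x - μ ^ 2 / 2))) := by
  rw [gaussianReal_of_var_ne_zero _ one_ne_zero, gaussianReal_of_var_ne_zero _ one_ne_zero,
    ← withDensity_mul _ (measurable_gaussianPDF 0 1) (by fun_prop)]
  congr 1
  ext x
  rw [Pi.mul_apply, gaussianPDF, gaussianPDF, ← ENNReal.ofReal_mul (gaussianPDFReal_nonneg _ _ _),
    gaussianPDFReal, gaussianPDFReal, mul_assoc (√_)⁻¹, ← Real.exp_add]
  congr 3
  push_cast
  ring

lemma gaussianReal_Ioi_ne_zero (μ c : ℝ) : gaussianReal μ 1 (Set.Ioi c) ≠ 0 := fun h ↦ by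
  have := gaussianReal_absolutelyContinuous' μ one_ne_zero h
  simp at this

lemma integrable_exp_mul_restrict (c t : ℝ) :
    Integrable (fun x ↦ Real.exp (t * x)) ((gaussianReal 0 1).restrict (Set.Ioi c)) :=
  (integrable_exp_mul_gaussianReal t).restrict

lemma mem_interior_integrableExpSet (c t : ℝ) :
    t ∈ interior (integrableExpSet (fun x ↦ x) ((gaussianReal 0 1).restrict (Set.Ioi c))) := by
  have : integrableExpSet (fun x ↦ x) ((gaussianReal 0 1).restrict (Set.Ioi c)) = Set.univ :=
    Set.eq_univ_of_forall (integrable_exp_mul_restrict c)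
  simp [this]

/-- Truncated unit-variance Gaussians are exponential tilts of the restricted standard Gaussian. -/
lemma cond_gaussianReal_eq_tilted_s12 (c μ : ℝ) :
    (gaussianReal μ 1)[|Set.Ioi c]
      = ((gaussianReal 0 1).restrict (Set.Ioi c)).tilted (fun x ↦ μ * x) := by
  have hne : NeZero ((gaussianReal 0 1).restrict (Set.Ioi c)) :=
    ⟨by simpa [Measure.restrict_eq_zero] using gaussianReal_Ioi_ne_zero 0 c⟩
  have hp := isProbabilityMeasure_tilted (integrable_exp_mul_restrict c μ)
  have hp' := cond_isProbabilityMeasure (gaussianReal_Ioi_ne_zero μ c)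
  have hZ := integral_exp_pos (integrable_exp_mul_restrict c μ)
  -- Both sides are probability measures, so proportionality is enough.
  obtain ⟨a, ha⟩ : ∃ a : ENNReal, (gaussianReal μ 1)[|Set.Ioi c]
      = a • ((gaussianReal 0 1).restrict (Set.Ioi c)).tilted (fun x ↦ μ * x) := by
    refine ⟨(gaussianReal μ 1 (Set.Ioi c))⁻¹ * ENNReal.ofReal
      ((∫ x, Real.exp (μ * x) ∂((gaussianReal 0 1).restrict (Set.Ioi c)))
        * Real.exp (-(μ ^ 2 / 2))), ?_⟩
    rw [ProbabilityTheory.cond, mul_smul]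
    congr 1
    rw [gaussianReal_eq_withDensity_exp, restrict_withDensity measurableSet_Ioi, Measure.tilted,
      ← withDensity_smul _ (by fun_prop)]
    congr 1
    ext x
    rw [Pi.smul_apply, smul_eq_mul, ← ENNReal.ofReal_mul (by positivity), sub_eq_add_neg,
      Real.exp_add]
    congr 1
    field_simp
  have h1 := congrArg (fun m : Measure ℝ ↦ m Set.univ) ha
  simp only [Measure.smul_apply, measure_univ, smul_eq_mul, mul_one] at h1
  rw [ha, ← h1, one_smul]

/-- The truncated-Gaussian conditional mean `f(μ) = E_μ[y | y > c]` is
differentiable in the mean parameter, with derivative equal to the conditional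
variance (the conditional Fisher information), which is strictly positive. -/
theorem truncated_gaussian_mean_deriv
    (c : ℝ) (μ₀ : ℝ) :
    HasDerivAt (fun μ : ℝ => ∫ x, x ∂((gaussianReal μ 1)[|Set.Ioi c]))
      (∫ x, (x - ∫ x', x' ∂((gaussianReal μ₀ 1)[|Set.Ioi c])) ^ 2
        ∂((gaussianReal μ₀ 1)[|Set.Ioi c])) μ₀
    ∧ 0 < ∫ x, (x - ∫ x', x' ∂((gaussianReal μ₀ 1)[|Set.Ioi c])) ^ 2
        ∂((gaussianReal μ₀ 1)[|Set.Ioi c]) := by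
  have hmem := mem_interior_integrableExpSet c
  have hvar := variance_eq_integral (μ := (gaussianReal μ₀ 1)[|Set.Ioi c])
    (X := fun x : ℝ ↦ x) aemeasurable_id'
  rw [← hvar]
  constructor
  · have hmean : (fun μ : ℝ ↦ ∫ x, x ∂((gaussianReal μ 1)[|Set.Ioi c]))
        = deriv (cgf (fun x ↦ x) ((gaussianReal 0 1).restrict (Set.Ioi c))) := by
      ext μ
      rw [cond_gaussianReal_eq_tilted_s12]
      exact integral_tilted_mul_self (hmem μ)
    rw [hmean, cond_gaussianReal_eq_tilted_s12, variance_tilted_mul (hmem μ₀), iteratedDeriv_succ,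
      iteratedDeriv_one]
    exact (analyticAt_cgf (hmem μ₀)).deriv.differentiableAt.hasDerivAt
  · have hp' := cond_isProbabilityMeasure (gaussianReal_Ioi_ne_zero μ₀ c)
    refine lt_of_le_of_ne (variance_nonneg _ _) fun h0 ↦ ?_
    have hL : MemLp (fun x : ℝ ↦ x) 2 ((gaussianReal μ₀ 1)[|Set.Ioi c]) := by
      rw [cond_gaussianReal_eq_tilted_s12]
      exact memLp_tilted_mul (hmem μ₀) 2
    have hae := ae_eq_integral_of_variance_eq_zero hL h0.symm
    -- Zero variance concentrates the measure at its mean, which is a null point of the Gaussian.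
    have := nullSingletonClass_gaussianReal (μ := μ₀) (v := 1) one_ne_zero
    have hnull : (gaussianReal μ₀ 1)[|Set.Ioi c]
        {∫ x, x ∂((gaussianReal μ₀ 1)[|Set.Ioi c])} = 0 :=
      cond_absolutelyContinuous (measure_singleton _)
    have hfalse : ∀ᵐ x ∂((gaussianReal μ₀ 1)[|Set.Ioi c]), False := by
      filter_upwards [hae, measure_eq_zero_iff_ae_notMem.mp hnull] with x hx hx'
      exact hx' hx
    simp at hfalse
    exact gaussianReal_Ioi_ne_zero μ₀ c hfalse
end

section
/- Let c ∈ ℝ. The function μ ↦ ∫ x d(N(μ,1)[·|(c,∞)]) mapping the mean parameter to the conditional mean of a N(μ,1) random variable given exceedance of c is strictly increasing on ℝ. -/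
/-!
The family `N(μ,1)` has a monotone likelihood ratio: for `a < b` the ratio of the densities
`p_b / p_a` is strictly increasing. Let `m` be the conditional mean under `N(a,1)` given
`(c,∞)`, so that `∫_{(c,∞)} p_a(x) (x - m) dx = 0`. The function
`x ↦ (p_b(x) p_a(m) - p_a(x) p_b(m)) (x - m)` is nonnegative and vanishes only at `m`, hence its
integral over `(c,∞)` is positive. This says that `∫_{(c,∞)} p_b(x) (x - m) dx > 0`, and so the
conditional mean under `N(b,1)` exceeds `m`.
-/

open MeasureTheory ProbabilityTheory

/-- Strict monotone likelihood ratio property of the Gaussian location family, in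
cross-multiplied form. -/
lemma gaussianPDFReal_cross_lt {a b x y : ℝ} (hab : a < b) (hxy : x < y) :
    gaussianPDFReal b 1 x * gaussianPDFReal a 1 y
      < gaussianPDFReal a 1 x * gaussianPDFReal b 1 y := by
  have hs : 0 < (Real.sqrt (2 * Real.pi * ((1 : NNReal) : ℝ)))⁻¹ := by
    simp only [NNReal.coe_one]
    positivity
  simp only [gaussianPDFReal_def]
  rw [mul_mul_mul_comm, mul_mul_mul_comm _ (Real.exp (-(x - a) ^ 2 / _)),
    ← Real.exp_add, ← Real.exp_add]
  refine mul_lt_mul_of_pos_left (Real.exp_lt_exp.2 ?_) (mul_pos hs hs)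
  simp only [NNReal.coe_one]
  nlinarith [mul_pos (sub_pos.2 hab) (sub_pos.2 hxy)]

lemma cross_mul_sub_pos {a b x m : ℝ} (hab : a < b) (hx : x ≠ m) :
    0 < (gaussianPDFReal b 1 x * gaussianPDFReal a 1 m
      - gaussianPDFReal a 1 x * gaussianPDFReal b 1 m) * (x - m) := by
  rcases lt_or_gt_of_ne hx with h | h
  · have := gaussianPDFReal_cross_lt hab h
    exact mul_pos_of_neg_of_neg (by linarith) (by linarith)
  · have := gaussianPDFReal_cross_lt hab h
    exact mul_pos (by linarith) (by linarith)

lemma integrable_pdf_mul_sub (μ m : ℝ) :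
    Integrable (fun x => gaussianPDFReal μ 1 x * (x - m)) := by
  have h : Integrable (fun x : ℝ => x - m) (gaussianReal μ 1) :=
    ((memLp_id_gaussianReal (μ := μ) (v := 1) 1).integrable (by simp)).sub (integrable_const m)
  rw [gaussianReal_of_var_ne_zero μ one_ne_zero,
    integrable_withDensity_iff_integrable_smul' (measurable_gaussianPDF μ 1)
      (Filter.Eventually.of_forall fun _ => gaussianPDF_lt_top)] at h
  simpa [toReal_gaussianPDF] using h

lemma gaussianReal_real_Ioi_pos (c μ : ℝ) : 0 < (gaussianReal μ 1).real (Set.Ioi c) := by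
  refine ENNReal.toReal_pos (fun h => ?_) (measure_ne_top _ _)
  have := gaussianReal_absolutelyContinuous' μ one_ne_zero h
  simp at this

/-- The truncated first moment about `m` is the probability of the truncation event times the
deviation of the conditional mean from `m`. -/
lemma setIntegral_pdf_mul_sub (c μ m : ℝ) :
    ∫ x in Set.Ioi c, gaussianPDFReal μ 1 x * (x - m)
      = (gaussianReal μ 1).real (Set.Ioi c)
        * ((∫ x, x ∂((gaussianReal μ 1)[|Set.Ioi c])) - m) := by
  have hP := gaussianReal_real_Ioi_pos c μ
  have hint : Integrable (fun x : ℝ => x) (gaussianReal μ 1) :=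
    (memLp_id_gaussianReal (μ := μ) (v := 1) 1).integrable (by simp)
  have h1 : ∫ x in Set.Ioi c, gaussianPDFReal μ 1 x * (x - m)
      = ∫ x in Set.Ioi c, (x - m) ∂(gaussianReal μ 1) := by
    rw [← integral_indicator measurableSet_Ioi, ← integral_indicator measurableSet_Ioi,
      integral_gaussianReal_eq_integral_smul one_ne_zero]
    congr 1
    ext x
    by_cases hx : x ∈ Set.Ioi c <;> simp [hx, Set.indicator]
  have h2 : ∫ x, x ∂((gaussianReal μ 1)[|Set.Ioi c])
      = ((gaussianReal μ 1).real (Set.Ioi c))⁻¹ * ∫ x in Set.Ioi c, x ∂(gaussianReal μ 1) := by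
    rw [ProbabilityTheory.cond, integral_smul_measure, ENNReal.toReal_inv, smul_eq_mul]
    rfl
  rw [h1, h2, integral_sub hint.integrableOn (integrable_const m), setIntegral_const, smul_eq_mul]
  field_simp

/-- The truncated-Gaussian conditional mean `μ ↦ E_μ[y | y > c]` is strictly
increasing in the mean parameter. -/
theorem truncated_gaussian_mean_strictMono
    (c : ℝ) :
    StrictMono (fun μ : ℝ => ∫ x, x ∂((gaussianReal μ 1)[|Set.Ioi c])) := by
  intro a b hab
  show ∫ x, x ∂((gaussianReal a 1)[|Set.Ioi c]) < ∫ x, x ∂((gaussianReal b 1)[|Set.Ioi c])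
  have ha := setIntegral_pdf_mul_sub c a (∫ x, x ∂((gaussianReal a 1)[|Set.Ioi c]))
  have hb := setIntegral_pdf_mul_sub c b (∫ x, x ∂((gaussianReal a 1)[|Set.Ioi c]))
  rw [sub_self, mul_zero] at ha
  generalize ∫ x, x ∂((gaussianReal a 1)[|Set.Ioi c]) = m at ha hb ⊢
  have hia := (integrable_pdf_mul_sub a m).const_mul (gaussianPDFReal b 1 m)
  have hib := (integrable_pdf_mul_sub b m).const_mul (gaussianPDFReal a 1 m)
  have hF : (fun x => (gaussianPDFReal b 1 x * gaussianPDFReal a 1 m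
      - gaussianPDFReal a 1 x * gaussianPDFReal b 1 m) * (x - m))
      = fun x => gaussianPDFReal a 1 m * (gaussianPDFReal b 1 x * (x - m))
        - gaussianPDFReal b 1 m * (gaussianPDFReal a 1 x * (x - m)) := by
    ext x; ring
  have hpos : 0 < ∫ x in Set.Ioi c, (gaussianPDFReal b 1 x * gaussianPDFReal a 1 m
      - gaussianPDFReal a 1 x * gaussianPDFReal b 1 m) * (x - m) := by
    rw [setIntegral_pos_iff_support_of_nonneg_ae]
    · -- The support contains every point of `(c,∞)` beyond `m`.
      have hsub : Set.Ioi (max c m) ⊆ (Function.support fun x =>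
          (gaussianPDFReal b 1 x * gaussianPDFReal a 1 m
            - gaussianPDFReal a 1 x * gaussianPDFReal b 1 m) * (x - m)) ∩ Set.Ioi c := by
        intro x hx
        obtain ⟨hc, hm⟩ := max_lt_iff.1 (Set.mem_Ioi.1 hx)
        exact ⟨(cross_mul_sub_pos hab hm.ne').ne', hc⟩
      exact lt_of_lt_of_le (by simp) (measure_mono hsub)
    · refine Filter.Eventually.of_forall fun x => ?_
      rcases eq_or_ne x m with rfl | hx
      · simp
      · exact (cross_mul_sub_pos hab hx).le
    · rw [hF]
      exact (hib.sub hia).integrableOn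
  rw [hF, integral_sub hib.integrableOn hia.integrableOn, integral_const_mul, integral_const_mul,
    ha, hb, mul_zero, sub_zero] at hpos
  have h1 := (mul_pos_iff_of_pos_left (gaussianPDFReal_pos a 1 m one_ne_zero)).1 hpos
  exact sub_pos.1 ((mul_pos_iff_of_pos_left (gaussianReal_real_Ioi_pos c b)).1 h1)
end
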